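/- arXiv:math/9905124 — 2 statements merged into one kernel-verified Lean document; each statement's English description precedes it below -/
import Mathlib

section
/- A nonprincipal filter F on ω is μ_p̂-measurable if and only if F is μ_p̂-small, i.e., there is a partition of ω into disjoint finite intervals (I_n) and sets J_n ⊆ 2^{I_n} with Σ_n μ_p̂({x : x↾I_n ∈ J_n}) < ∞ such that every X ∈ F satisfies X↾I_n ∈ J_n for infinitely many n. -/
open MeasureTheory Filter Set
open scoped ENNReal

/-- `μ` is the product (Bernoulli) measure on `Bool^ι` determined by the sequence `p`:
a probability measure giving each cylinder set its natural product value. -/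
def IsBernoulli {ι : Type*} (μ : Measure (ι → Bool)) (p : ι → ℝ≥0∞) : Prop :=
  IsProbabilityMeasure μ ∧
    ∀ (s : Finset ι) (f : ι → Bool),
      μ {x | ∀ i ∈ s, x i = f i} = ∏ i ∈ s, (if f i then p i else 1 - p i)

/-- The subset of `2^ω` corresponding to a filter on `ω`, via characteristic functions. -/
def filterSet (F : Filter ℕ) : Set (ℕ → Bool) := {x | {n | x n = true} ∈ F}

/-- `H` is small with respect to `μ`: there is a partition of `ω` into consecutive finite
intervals `I n = [k n, k (n+1))` and sets `J n` of reals depending only on coordinates in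
`I n`, such that every member of `H` is in infinitely many `J n`, and `∑ μ (J n) < ∞`. -/
def IsSmall (μ : Measure (ℕ → Bool)) (H : Set (ℕ → Bool)) : Prop :=
  ∃ (k : ℕ → ℕ) (J : ℕ → Set (ℕ → Bool)),
    k 0 = 0 ∧ StrictMono k ∧
    (∀ n (x y : ℕ → Bool), (∀ i, k n ≤ i → i < k (n + 1) → x i = y i) →
      (x ∈ J n ↔ y ∈ J n)) ∧
    H ⊆ {x | {n | x ∈ J n}.Infinite} ∧
    ∑' n, μ (J n) ≠ ⊤

namespace IsBernoulli

lemma measurableSet_cylinder {ι : Type*} (s : Finset ι) (f : ι → Bool) :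
    MeasurableSet {x : ι → Bool | ∀ i ∈ s, x i = f i} := by
  have h : {x : ι → Bool | ∀ i ∈ s, x i = f i} = ⋂ i ∈ s, (fun x : ι → Bool => x i) ⁻¹' {f i} := by
    ext x; simp
  rw [h]
  exact Finset.measurableSet_biInter _ fun i _ => measurable_pi_apply i (measurableSet_singleton _)

/-- The values on cylinders determine a Bernoulli measure. -/
lemma eq_of_isBernoulli {ι : Type*} {μ ν : Measure (ι → Bool)} {p : ι → ℝ≥0∞}
    (hμ : IsBernoulli μ p) (hν : IsBernoulli ν p) : μ = ν := by
  classical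
  have := hμ.1
  have := hν.1
  refine ext_of_generate_finite
    {A | ∃ (s : Finset ι) (f : ι → Bool), A = {x | ∀ i ∈ s, x i = f i}} ?_ ?_ ?_ (by simp)
  · refine le_antisymm ?_ (MeasurableSpace.generateFrom_le ?_)
    · rw [MeasurableSpace.pi]
      refine iSup_le fun i => ?_
      rw [← measurable_iff_comap_le]
      refine @measurable_to_bool _ (_) _ ?_
      refine MeasurableSpace.measurableSet_generateFrom ⟨{i}, fun _ => true, ?_⟩
      ext x; simp
    · rintro A ⟨s, f, rfl⟩
      exact measurableSet_cylinder s f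
  · rintro A ⟨s, f, rfl⟩ B ⟨t, g, rfl⟩ ⟨z, hz1, hz2⟩
    refine ⟨s ∪ t, z, ?_⟩
    ext x
    simp only [mem_inter_iff, mem_ofPred_eq, Finset.mem_union] at hz1 hz2 ⊢
    constructor
    · rintro ⟨h1, h2⟩ i (hi | hi)
      · rw [h1 i hi, hz1 i hi]
      · rw [h2 i hi, hz2 i hi]
    · intro h
      exact ⟨fun i hi => by rw [h i (Or.inl hi), hz1 i hi],
        fun i hi => by rw [h i (Or.inr hi), hz2 i hi]⟩
  · rintro A ⟨s, f, rfl⟩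
    rw [hμ.2, hν.2]

end IsBernoulli

open Classical in
/-- The point which agrees with `x` on `S` and with `y` off `S`. -/
noncomputable def mix (S : Set ℕ) (x y : ℕ → Bool) : ℕ → Bool :=
  fun i => if i ∈ S then x i else y i

lemma mix_of_mem {S : Set ℕ} {i : ℕ} (h : i ∈ S) (x y : ℕ → Bool) : mix S x y i = x i :=
  if_pos h

lemma mix_of_notMem {S : Set ℕ} {i : ℕ} (h : i ∉ S) (x y : ℕ → Bool) : mix S x y i = y i :=
  if_neg h

lemma measurable_mix (S : Set ℕ) :
    Measurable fun z : (ℕ → Bool) × (ℕ → Bool) => mix S z.1 z.2 := by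
  refine measurable_pi_lambda _ fun i => ?_
  by_cases h : i ∈ S
  · simp only [mix_of_mem h]; fun_prop
  · simp only [mix_of_notMem h]; fun_prop

/-- Taking the coordinates in `S` and those off `S` from independent samples yields a sample of
the same Bernoulli measure. -/
lemma IsBernoulli.map_mix {μ : Measure (ℕ → Bool)} {p : ℕ → ℝ≥0∞} (hμ : IsBernoulli μ p)
    (S : Set ℕ) : (μ.prod μ).map (fun z => mix S z.1 z.2) = μ := by
  classical
  have := hμ.1
  refine IsBernoulli.eq_of_isBernoulli (p := p) ⟨?_, fun s f => ?_⟩ hμ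
  · exact Measure.isProbabilityMeasure_map (measurable_mix S).aemeasurable
  · rw [Measure.map_apply (measurable_mix S) (IsBernoulli.measurableSet_cylinder s f)]
    have h : (fun z : (ℕ → Bool) × (ℕ → Bool) => mix S z.1 z.2) ⁻¹' {x | ∀ i ∈ s, x i = f i} =
        {x | ∀ i ∈ s.filter (· ∈ S), x i = f i} ×ˢ {x | ∀ i ∈ s.filter (· ∉ S), x i = f i} := by
      ext ⟨x, y⟩
      simp only [mem_preimage, mem_ofPred_eq, mem_prod, Finset.mem_filter]
      constructor
      · intro h
        exact ⟨fun i hi => by rw [← h i hi.1, mix_of_mem hi.2],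
          fun i hi => by rw [← h i hi.1, mix_of_notMem hi.2]⟩
      · rintro ⟨h1, h2⟩ i hi
        by_cases hS : i ∈ S
        · rw [mix_of_mem hS, h1 i ⟨hi, hS⟩]
        · rw [mix_of_notMem hS, h2 i ⟨hi, hS⟩]
    rw [h, Measure.prod_prod, hμ.2, hμ.2, Finset.prod_filter_mul_prod_filter_not]

/-- Sets depending on disjoint sets of coordinates are independent. -/
lemma IsBernoulli.measure_inter {μ : Measure (ℕ → Bool)} {p : ℕ → ℝ≥0∞} (hμ : IsBernoulli μ p)
    {S : Set ℕ} {A B : Set (ℕ → Bool)} (hA : DependsOn (fun x => x ∈ A) S)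
    (hB : DependsOn (fun x => x ∈ B) Sᶜ) (hAB : NullMeasurableSet (A ∩ B) μ) :
    μ (A ∩ B) = μ A * μ B := by
  have := hμ.1
  rw [← hμ.map_mix S] at hAB
  conv_lhs => rw [← hμ.map_mix S]
  rw [Measure.map_apply₀ (measurable_mix S).aemeasurable hAB, ← Measure.prod_prod]
  congr 1
  ext ⟨x, y⟩
  have h1 : (mix S x y ∈ A) = (x ∈ A) := hA fun i hi => mix_of_mem hi x y
  have h2 : (mix S x y ∈ B) = (y ∈ B) := hB fun i hi => mix_of_notMem hi x y
  simp only [mem_preimage, mem_inter_iff, mem_prod, h1, h2]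

/-- A zero-one law for null measurable sets invariant under finite changes. -/
lemma IsBernoulli.measure_eq_zero_or_measure_compl_eq_zero {μ : Measure (ℕ → Bool)}
    {p : ℕ → ℝ≥0∞} (hμ : IsBernoulli μ p) {A : Set (ℕ → Bool)} (hA : NullMeasurableSet A μ)
    (hd : ∀ s : Finset ℕ, DependsOn (fun x => x ∈ A) (s : Set ℕ)ᶜ) : μ A = 0 ∨ μ Aᶜ = 0 := by
  have := hμ.1
  refine or_iff_not_imp_left.2 fun h0 => ?_
  have hν : IsBernoulli ((μ A)⁻¹ • μ.restrict A) p := by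
    refine ⟨⟨?_⟩, fun s f => ?_⟩
    · simp [ENNReal.inv_mul_cancel h0 (measure_ne_top μ A)]
    · have hC := IsBernoulli.measurableSet_cylinder s f
      have hCs : DependsOn (fun x => x ∈ {x : ℕ → Bool | ∀ i ∈ s, x i = f i}) (s : Set ℕ) := by
        intro x y hxy
        simp only [mem_ofPred_eq, eq_iff_iff]
        exact forall₂_congr fun i hi => by rw [hxy i hi]
      rw [Measure.smul_apply, Measure.restrict_apply hC,
        hμ.measure_inter hCs (hd s) (hC.nullMeasurableSet.inter hA), hμ.2, smul_eq_mul, mul_comm,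
        mul_assoc, ENNReal.mul_inv_cancel h0 (measure_ne_top μ A), mul_one]
  rw [← hν.eq_of_isBernoulli hμ, Measure.smul_apply, Measure.restrict_apply₀']
  · simp
  · exact hA

/-- As `p ≤ 1 / 2`, some coupling of `μ` with itself is carried by pairs of disjoint sets; hence a
set of full measure contains such a pair. -/
lemma IsBernoulli.exists_disjoint {μ : Measure (ℕ → Bool)} {p : ℕ → ℝ≥0∞}
    (hp : ∀ n, p n ≤ 1 / 2) (hμ : IsBernoulli μ p) {A : Set (ℕ → Bool)} (hA : μ Aᶜ = 0) :
    ∃ x ∈ A, ∃ y ∈ A, ∀ n, ¬ (x n = true ∧ y n = true) := by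
  classical
  have hp2 (n : ℕ) : p n + p n ≤ 1 :=
    (add_le_add (hp n) (hp n)).trans_eq (by rw [one_div, ENNReal.inv_two_add_inv_two])
  have hp1 (n : ℕ) : p n ≠ ⊤ := ne_top_of_le_ne_top (by simp) (hp n)
  let ν (n : ℕ) : Measure (Bool × Bool) := p n • Measure.dirac (true, false) +
    p n • Measure.dirac (false, true) + (1 - (p n + p n)) • Measure.dirac (false, false)
  have hν (n : ℕ) : IsProbabilityMeasure (ν n) := ⟨by simp [ν, add_tsub_cancel_of_le (hp2 n)]⟩
  have hsub (n : ℕ) : p n + (1 - (p n + p n)) = 1 - p n := by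
    refine ENNReal.eq_sub_of_add_eq (hp1 n) ?_
    rw [add_right_comm, add_tsub_cancel_of_le (hp2 n)]
  have hdisj : ∀ᵐ ω ∂(Measure.infinitePi ν), ∀ n, ω n ≠ (true, true) := by
    refine ae_all_iff.2 fun n => ?_
    have := (measurePreserving_eval_infinitePi ν n).quasiMeasurePreserving.ae
      (p := fun z => z ≠ (true, true)) ?_
    · exact this
    · rw [ae_iff]; simp [ν]
  have hm (g : Bool × Bool → Bool) : Measurable fun (ω : ℕ → Bool × Bool) n => g (ω n) :=
    measurable_pi_lambda _ fun n => (Measurable.of_discrete (f := g)).comp (measurable_pi_apply n)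
  have hmarg (g : Bool × Bool → Bool) (hg : ∀ n b, ν n (g ⁻¹' {b}) = if b then p n else 1 - p n) :
      IsBernoulli ((Measure.infinitePi ν).map fun ω n => g (ω n)) p := by
    refine ⟨Measure.isProbabilityMeasure_map (hm g).aemeasurable, fun s f => ?_⟩
    rw [Measure.map_apply (hm g) (IsBernoulli.measurableSet_cylinder s f)]
    have : (fun (ω : ℕ → Bool × Bool) n => g (ω n)) ⁻¹' {x | ∀ i ∈ s, x i = f i} =
        (s : Set ℕ).pi fun i => g ⁻¹' {f i} := by
      ext ω; simp [Set.mem_pi]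
    rw [this, Measure.infinitePi_pi _ fun i _ => MeasurableSet.of_discrete]
    exact Finset.prod_congr rfl fun i _ => hg i (f i)
  have hae (g : Bool × Bool → Bool) (hg : ∀ n b, ν n (g ⁻¹' {b}) = if b then p n else 1 - p n) :
      ∀ᵐ ω ∂(Measure.infinitePi ν), (fun n => g (ω n)) ∈ A := by
    refine ae_of_ae_map (hm g).aemeasurable (p := fun x => x ∈ A) ?_
    rw [(hmarg g hg).eq_of_isBernoulli hμ]
    exact hA
  have h1 := hae Prod.fst fun n b => by
    cases b <;> simp [ν, hsub]
  have h2 := hae Prod.snd fun n b => by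
    cases b <;> simp [ν, hsub]
  obtain ⟨ω, hω, hω1, hω2⟩ := (hdisj.and (h1.and h2)).exists
  exact ⟨_, hω1, _, hω2, fun n hn => hω n (Prod.ext hn.1 hn.2)⟩

lemma mix_self (S : Set ℕ) (x : ℕ → Bool) : mix S x x = x := by
  funext i
  by_cases h : i ∈ S
  · exact mix_of_mem h x x
  · exact mix_of_notMem h x x

/-- A set depending on finitely many coordinates is measurable. -/
lemma measurableSet_of_dependsOn {A : Set (ℕ → Bool)} {n : ℕ}
    (hA : DependsOn (fun x => x ∈ A) (Iio n)) : MeasurableSet A := by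
  let r : (ℕ → Bool) → (Fin n → Bool) := fun x i => x i
  have hr : Measurable r := measurable_pi_lambda _ fun i => measurable_pi_apply _
  have h : A = r ⁻¹' (r '' A) := by
    refine (subset_preimage_image r A).antisymm ?_
    rintro x ⟨y, hy, hyx⟩
    have : (x ∈ A) = (y ∈ A) := hA fun i hi => (congrFun hyx ⟨i, hi⟩).symm
    rwa [this]
  rw [h]
  exact hr (Set.toFinite _).measurableSet

lemma dependsOn_mem_iUnion {κ : Sort*} {A : κ → Set (ℕ → Bool)} {S : Set ℕ}
    (h : ∀ i, DependsOn (fun x => x ∈ A i) S) : DependsOn (fun x => x ∈ ⋃ i, A i) S := by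
  intro x y hxy
  simp only [mem_iUnion, eq_iff_iff]
  exact exists_congr fun i => (h i hxy).to_iff

/-- The points which can be moved into `H` by changing their first `n` coordinates. -/
def headSaturation (n : ℕ) (H : Set (ℕ → Bool)) : Set (ℕ → Bool) :=
  {x | ∃ t, mix (Iio n) t x ∈ H}

lemma dependsOn_mem_headSaturation {n m : ℕ} {H : Set (ℕ → Bool)}
    (hH : DependsOn (fun x => x ∈ H) (Iio m)) :
    DependsOn (fun x => x ∈ headSaturation n H) (Ico n m) := by
  intro x y hxy
  simp only [headSaturation, mem_ofPred_eq, eq_iff_iff]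
  refine exists_congr fun t => (hH fun i hi => ?_).to_iff
  by_cases h : i ∈ Iio n
  · rw [mix_of_mem h, mix_of_mem h]
  · rw [mix_of_notMem h, mix_of_notMem h]
    exact hxy i ⟨not_lt.1 h, hi⟩

lemma IsBernoulli.exists_measure_headSaturation_le {μ : Measure (ℕ → Bool)} {p : ℕ → ℝ≥0∞}
    (hp : ∀ n, 0 < p n ∧ p n < 1) (hμ : IsBernoulli μ p) (n : ℕ) :
    ∃ K : ℝ≥0∞, K ≠ ⊤ ∧ ∀ H, MeasurableSet H → μ (headSaturation n H) ≤ K * μ H := by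
  let e (u : Fin n → Bool) : ℕ → Bool := fun i => if h : i < n then u ⟨i, h⟩ else false
  let C (t : ℕ → Bool) : Set (ℕ → Bool) := {x | ∀ i ∈ Finset.range n, x i = t i}
  have hC (t : ℕ → Bool) : μ (C t) ≠ 0 := by
    simp only [C]
    rw [hμ.2, Finset.prod_ne_zero_iff]
    intro i _
    split_ifs
    · exact (hp i).1.ne'
    · exact (tsub_pos_of_lt (hp i).2).ne'
  refine ⟨∑ u, (μ (C (e u)))⁻¹, ENNReal.sum_ne_top.2 fun u _ => ENNReal.inv_ne_top.2 (hC _),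
    fun H hH => ?_⟩
  have hsub : headSaturation n H ⊆ ⋃ u, {x | mix (Iio n) (e u) x ∈ H} := by
    rintro x ⟨t, ht⟩
    refine mem_iUnion.2 ⟨fun i => t i, ?_⟩
    have : mix (Iio n) (e fun i => t i) x = mix (Iio n) t x := by
      funext i
      by_cases h : i ∈ Iio n
      · rw [mix_of_mem h, mix_of_mem h]
        exact dif_pos h
      · rw [mix_of_notMem h, mix_of_notMem h]
    rwa [mem_ofPred_eq, this]
  have hle (t : ℕ → Bool) : μ {x | mix (Iio n) t x ∈ H} ≤ (μ (C t))⁻¹ * μ H := by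
    have := hμ.1
    have hmix {x : ℕ → Bool} (hx : x ∈ C t) : mix (Iio n) t x = x := by
      funext i
      by_cases h : i ∈ Iio n
      · rw [mix_of_mem h, hx i (Finset.mem_range.2 h)]
      · rw [mix_of_notMem h]
    have heq : C t ∩ {x | mix (Iio n) t x ∈ H} = C t ∩ H := by
      ext x
      refine and_congr_right fun hx => ?_
      simp only [mem_ofPred_eq, hmix hx]
    have hind : μ (C t ∩ {x | mix (Iio n) t x ∈ H}) = μ (C t) * μ {x | mix (Iio n) t x ∈ H} := by
      refine hμ.measure_inter (S := Iio n) ?_ ?_ ?_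
      · intro x y hxy
        simp only [C, mem_ofPred_eq, eq_iff_iff]
        exact forall₂_congr fun i hi => by rw [hxy i (Finset.mem_range.1 hi)]
      · intro x y hxy
        have : mix (Iio n) t x = mix (Iio n) t y := by
          funext i
          by_cases h : i ∈ Iio n
          · rw [mix_of_mem h, mix_of_mem h]
          · rw [mix_of_notMem h, mix_of_notMem h, hxy i h]
        simp only [mem_ofPred_eq, this]
      · rw [heq]
        exact ((IsBernoulli.measurableSet_cylinder _ _).inter hH).nullMeasurableSet
    rw [mul_comm, ← div_eq_mul_inv, ENNReal.le_div_iff_mul_le (Or.inl (hC t))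
      (Or.inl (measure_ne_top μ _)), mul_comm, ← hind, heq]
    exact measure_mono inter_subset_right
  calc μ (headSaturation n H) ≤ ∑ u, μ {x | mix (Iio n) (e u) x ∈ H} :=
        (measure_mono hsub).trans (measure_iUnion_fintype_le _ _)
    _ ≤ ∑ u, (μ (C (e u)))⁻¹ * μ H := Finset.sum_le_sum fun u _ => hle _
    _ = _ := by rw [Finset.sum_mul]

/-- The set of points whose initial segment of length `n` forces membership in `U`. -/
def forcedBy (U : Set (ℕ → Bool)) (n : ℕ) : Set (ℕ → Bool) :=
  {x | ∀ y : ℕ → Bool, (∀ i < n, x i = y i) → y ∈ U}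

lemma exists_mem_forcedBy {U : Set (ℕ → Bool)} (hU : IsOpen U) {x : ℕ → Bool} (hx : x ∈ U)
    (n : ℕ) : ∃ m ≥ n, x ∈ forcedBy U m := by
  obtain ⟨I, u, hu, hsub⟩ := isOpen_pi_iff.1 hU x hx
  refine ⟨max n (I.sup id + 1), le_max_left _ _, fun y hy => hsub fun i hi => ?_⟩
  rw [← hy i (lt_max_of_lt_right (Nat.lt_succ_of_le (Finset.le_sup (f := id) hi)))]
  exact (hu i hi).2

/-- A null set is contained in the limit superior of a summable sequence of sets, the `m`-th of
which depends on the first `m` coordinates only. -/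
lemma exists_summable_cover {μ : Measure (ℕ → Bool)} [IsProbabilityMeasure μ]
    {N : Set (ℕ → Bool)} (hN : μ N = 0) :
    ∃ H : ℕ → Set (ℕ → Bool), (∀ m, DependsOn (fun x => x ∈ H m) (Iio m)) ∧
      ∑' m, μ (H m) ≠ ⊤ ∧ ∀ x ∈ N, {m | x ∈ H m}.Infinite := by
  have hex (i : ℕ) : ∃ U ⊇ N, IsOpen U ∧ μ U < 2⁻¹ ^ i :=
    N.exists_isOpen_lt_of_lt _ (by rw [hN]; exact ENNReal.pow_pos (by simp) i)
  choose U hNU hUo hUμ using hex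
  let E (i m : ℕ) : Set (ℕ → Bool) :=
    {x | i ≤ m ∧ x ∈ forcedBy (U i) m ∧ ∀ m' < m, i ≤ m' → x ∉ forcedBy (U i) m'}
  have hforced {i m m' : ℕ} (h : m' ≤ m) :
      DependsOn (fun x => x ∈ forcedBy (U i) m') (Iio m) := by
    intro x y hxy
    simp only [forcedBy, mem_ofPred_eq, eq_iff_iff]
    exact forall_congr' fun z => imp_congr_left <| forall₂_congr fun j hj => by
      rw [hxy j (hj.trans_le h)]
  have hE (i m : ℕ) : DependsOn (fun x => x ∈ E i m) (Iio m) := by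
    intro x y hxy
    simp only [E, mem_ofPred_eq, eq_iff_iff]
    refine and_congr_right fun _ => and_congr (hforced le_rfl hxy).to_iff ?_
    exact forall₂_congr fun m' hm' => imp_congr_right fun _ =>
      not_congr (hforced hm'.le hxy).to_iff
  have hEU (i : ℕ) : ∑' m, μ (E i m) ≤ μ (U i) := by
    rw [← measure_iUnion _ fun m => measurableSet_of_dependsOn (hE i m)]
    · exact measure_mono (iUnion_subset fun m x hx => hx.2.1 x fun _ _ => rfl)
    · intro m m' hne
      refine disjoint_left.2 fun x hx hx' => ?_
      rcases lt_or_gt_of_ne hne with h | h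
      · exact hx'.2.2 m h hx.1 hx.2.1
      · exact hx.2.2 m' h hx'.1 hx'.2.1
  refine ⟨fun m => ⋃ i, E i m, fun m => dependsOn_mem_iUnion fun i => hE i m, ?_, fun x hx => ?_⟩
  · refine ne_top_of_le_ne_top (b := ∑' i : ℕ, (2⁻¹ : ℝ≥0∞) ^ i) ?_ ?_
    · rw [ENNReal.tsum_geometric]; simp
    · calc ∑' m, μ (⋃ i, E i m) ≤ ∑' m, ∑' i, μ (E i m) :=
            ENNReal.tsum_le_tsum fun m => measure_iUnion_le _
        _ = ∑' i, ∑' m, μ (E i m) := ENNReal.tsum_comm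
        _ ≤ _ := ENNReal.tsum_le_tsum fun i => (hEU i).trans (hUμ i).le
  · refine infinite_of_not_bddAbove fun ⟨b, hb⟩ => ?_
    classical
    have hm := exists_mem_forcedBy (hUo (b + 1)) (hNU (b + 1) hx) (b + 1)
    have : Nat.find hm ≤ b := hb <| mem_iUnion.2 ⟨b + 1, (Nat.find_spec hm).1,
      (Nat.find_spec hm).2, fun m' h' hle hmem => Nat.find_min hm h' ⟨hle, hmem⟩⟩
    have := (Nat.find_spec hm).1
    omega

/-- A null set is covered infinitely often by sets of rapidly decreasing measure, each of which
depends on two consecutive blocks of a partition into intervals. -/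
lemma IsBernoulli.exists_block_cover {μ : Measure (ℕ → Bool)} {p : ℕ → ℝ≥0∞}
    (hp : ∀ n, 0 < p n ∧ p n < 1) (hμ : IsBernoulli μ p) {N : Set (ℕ → Bool)} (hN : μ N = 0) :
    ∃ (k : ℕ → ℕ) (C : ℕ → Set (ℕ → Bool)), k 0 = 0 ∧ StrictMono k ∧
      (∀ j, DependsOn (fun x => x ∈ C j) (Ico (k j) (k (j + 2)))) ∧
      (∀ j, μ (C j) ≤ 4⁻¹ ^ j) ∧ ∀ x ∈ N, {j | x ∈ C j}.Infinite := by
  have := hμ.1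
  obtain ⟨H, hH, hsum, hcov⟩ := exists_summable_cover hN
  have hg (j n : ℕ) : ∃ m > n, ∑' i, μ (headSaturation n (H (i + m))) ≤ 4⁻¹ ^ j := by
    obtain ⟨K, hK, hle⟩ := hμ.exists_measure_headSaturation_le hp n
    have hfin : ∑' m, μ (headSaturation n (H m)) ≠ ⊤ := by
      refine ne_top_of_le_ne_top (ENNReal.mul_ne_top hK hsum) ?_
      rw [← ENNReal.tsum_mul_left]
      exact ENNReal.tsum_le_tsum fun m => hle _ (measurableSet_of_dependsOn (hH m))
    have hlim := (ENNReal.tendsto_sum_nat_add _ hfin).eventually_le_const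
      (ENNReal.pow_pos (a := 4⁻¹) (by simp) j)
    obtain ⟨m, hm1, hm2⟩ := (hlim.and (eventually_gt_atTop n)).exists
    exact ⟨m, hm2, hm1⟩
  choose g hgn hgs using hg
  let k : ℕ → ℕ := fun j => Nat.rec (motive := fun _ => ℕ) 0 (fun j n => g j n) j
  have hk (j : ℕ) : k (j + 1) = g j (k j) := rfl
  have hmono : StrictMono k := strictMono_nat_of_lt_succ fun j => hgn j (k j)
  refine ⟨k, fun j => ⋃ m : Ico (k (j + 1)) (k (j + 2)), headSaturation (k j) (H m), rfl, hmono,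
    fun j => dependsOn_mem_iUnion fun m => ?_, fun j => ?_, fun x hx => ?_⟩
  · exact (dependsOn_mem_headSaturation (hH m)).mono (Ico_subset_Ico_right m.2.2.le)
  · refine le_trans (measure_mono ?_) ((measure_iUnion_le _).trans (hgs j (k j)))
    refine iUnion_subset fun m => ?_
    refine subset_iUnion_of_subset (m - k (j + 1)) ?_
    rw [← hk, Nat.sub_add_cancel m.2.1]
  · refine infinite_of_not_bddAbove fun ⟨b, hb⟩ => ?_
    obtain ⟨m, hm, hbm⟩ := (hcov x hx).exists_gt (k (b + 3))
    classical
    have hex : ∃ i, m < k i := ⟨m + 1, (hmono.le_apply (x := m + 1))⟩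
    have h1 : m < k (Nat.find hex) := Nat.find_spec hex
    have h2 : b + 3 < Nat.find hex := hmono.lt_iff_lt.1 (hbm.trans h1)
    obtain ⟨j, hj⟩ : ∃ j, Nat.find hex = j + 2 := ⟨Nat.find hex - 2, by omega⟩
    have h3 : k (j + 1) ≤ m := not_lt.1 (Nat.find_min hex (m := j + 1) (by omega))
    rw [hj] at h1
    have : j ≤ b := hb (mem_iUnion.2 ⟨⟨m, h3, h1⟩, x, by rwa [mix_self]⟩)
    omega

/-- Sets depending on single blocks of a partition into intervals, finitely many for each block,
may be merged blockwise to witness smallness. -/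
lemma IsSmall.of_blocks {μ : Measure (ℕ → Bool)} {A : Set (ℕ → Bool)} {k φ : ℕ → ℕ}
    {T : ℕ → Set (ℕ → Bool)} (hk0 : k 0 = 0) (hk : StrictMono k)
    (hφ : ∀ n, (φ ⁻¹' {n}).Finite)
    (hT : ∀ j, DependsOn (fun x => x ∈ T j) (Ico (k (φ j)) (k (φ j + 1))))
    (hA : ∀ x ∈ A, {j | x ∈ T j}.Infinite) (hsum : ∑' j, μ (T j) ≠ ⊤) : IsSmall μ A := by
  classical
  refine ⟨k, fun n => ⋃ j, ⋃ _ : φ j = n, T j, hk0, hk, fun n x y hxy => ?_, fun x hx => ?_,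
    ne_top_of_le_ne_top hsum ?_⟩
  · have hdep : DependsOn (fun x => x ∈ ⋃ j, ⋃ _ : φ j = n, T j) (Ico (k n) (k (n + 1))) :=
      dependsOn_mem_iUnion fun j => dependsOn_mem_iUnion fun h => h ▸ hT j
    exact (hdep fun i hi => hxy i hi.1 hi.2).to_iff
  · intro hfin
    refine hA x hx ((hfin.preimage' fun n _ => hφ n).subset fun j hj => ?_)
    exact mem_iUnion₂.2 ⟨j, rfl, hj⟩
  · calc ∑' n, μ (⋃ j, ⋃ _ : φ j = n, T j) ≤ ∑' n, ∑' j, if φ j = n then μ (T j) else 0 := by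
          refine ENNReal.tsum_le_tsum fun n => (measure_iUnion_le _).trans ?_
          refine ENNReal.tsum_le_tsum fun j => ?_
          split_ifs with h <;> simp [h]
      _ = ∑' j, ∑' n, if φ j = n then μ (T j) else 0 := ENNReal.tsum_comm
      _ = ∑' j, μ (T j) := tsum_congr fun j => by
          simp_rw [eq_comm (a := φ j)]
          exact tsum_ite_eq _ _

/-- Fubini and Markov: sections of a set of measure at most `4⁻ʲ` have measure at least `2⁻ʲ`
with probability at most `2⁻ʲ`. -/
lemma IsBernoulli.measure_large_section_le {μ : Measure (ℕ → Bool)} {p : ℕ → ℝ≥0∞}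
    (hμ : IsBernoulli μ p) (S : Set ℕ) {C : Set (ℕ → Bool)} (hC : MeasurableSet C) {j : ℕ}
    (hle : μ C ≤ 4⁻¹ ^ j) : μ {x | 2⁻¹ ^ j ≤ μ {y | mix S x y ∈ C}} ≤ 2⁻¹ ^ j := by
  have := hμ.1
  have hm := measurable_mix S hC
  have h := mul_meas_ge_le_lintegral (μ := μ) (measurable_measure_prodMk_left (ν := μ) hm) (2⁻¹ ^ j)
  rw [← Measure.prod_apply hm, ← Measure.map_apply (measurable_mix S) hC, hμ.map_mix S] at h
  have h4 : (4⁻¹ : ℝ≥0∞) ^ j = 2⁻¹ ^ j * 2⁻¹ ^ j := by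
    rw [← mul_pow, ← ENNReal.mul_inv (by simp) (by simp)]
    norm_num
  exact (ENNReal.mul_le_mul_iff_right (pow_ne_zero j (by simp))
    (ENNReal.pow_ne_top (by simp))).1 ((h.trans hle).trans_eq h4)

/-- A null filter is small. -/
lemma IsBernoulli.isSmall_filterSet {μ : Measure (ℕ → Bool)} {p : ℕ → ℝ≥0∞}
    (hp : ∀ n, 0 < p n ∧ p n < 1) (hμ : IsBernoulli μ p) {F : Filter ℕ}
    (hF : μ (filterSet F) = 0) : IsSmall μ (filterSet F) := by
  obtain ⟨k, C, hk0, hk, hC, hCμ, hcov⟩ := hμ.exists_block_cover hp hF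
  have hCm (j : ℕ) : MeasurableSet (C j) :=
    measurableSet_of_dependsOn ((hC j).mono fun i hi => hi.2)
  let P : Set ℕ := {i | ∃ a, k (2 * a) ≤ i ∧ i < k (2 * a + 1)}
  let B (j : ℕ) : Set (ℕ → Bool) := {x | 2⁻¹ ^ j ≤ μ {y | mix P x y ∈ C j}}
  have hgeom : ∑' j : ℕ, (2⁻¹ : ℝ≥0∞) ^ j ≠ ⊤ := by rw [ENNReal.tsum_geometric]; simp
  have hl : StrictMono fun n => k (2 * n) := fun a b hab => hk (by omega)
  by_cases hB : ∀ x ∈ filterSet F, {j | x ∈ B j}.Infinite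
  · refine IsSmall.of_blocks (k := fun n => k (2 * n)) (φ := fun j => (j + 1) / 2) (T := B)
      hk0 hl (fun n => ?_) (fun j x x' hx => ?_) hB ?_
    · refine (finite_Iic (2 * n)).subset fun j hj => ?_
      simp only [mem_preimage, mem_singleton_iff] at hj
      simp only [mem_Iic]
      omega
    · have : ∀ y, (mix P x y ∈ C j) = (mix P x' y ∈ C j) := fun y => hC j fun i hi => by
        by_cases hiP : i ∈ P
        · rw [mix_of_mem hiP, mix_of_mem hiP]
          obtain ⟨a, ha1, ha2⟩ := hiP
          have h1 : 2 * a < j + 2 := hk.lt_iff_lt.1 (ha1.trans_lt hi.2)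
          have h2 : j < 2 * a + 1 := hk.lt_iff_lt.1 (hi.1.trans_lt ha2)
          have h3 : (j + 1) / 2 = a := by omega
          refine hx i ⟨?_, ?_⟩
          · simpa only [h3] using ha1
          · simp only [h3]
            exact ha2.trans (hk (by omega))
        · rw [mix_of_notMem hiP, mix_of_notMem hiP]
      simp only [B, mem_ofPred_eq, this]
    · exact ne_top_of_le_ne_top hgeom <|
        ENNReal.tsum_le_tsum fun j => hμ.measure_large_section_le P (hCm j) (hCμ j)
  · push Not at hB
    obtain ⟨X, hX, hXB⟩ := hB
    let T (j : ℕ) : Set (ℕ → Bool) := {y | X ∉ B j ∧ mix P X y ∈ C j}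
    refine IsSmall.of_blocks (k := fun n => k (2 * n)) (φ := fun j => j / 2) (T := T)
      hk0 hl (fun n => ?_) (fun j y y' hy => ?_) (fun y hy => ?_) ?_
    · refine (finite_Iic (2 * n + 1)).subset fun j hj => ?_
      simp only [mem_preimage, mem_singleton_iff] at hj
      simp only [mem_Iic]
      omega
    · have : (mix P X y ∈ C j) = (mix P X y' ∈ C j) := hC j fun i hi => by
        by_cases hiP : i ∈ P
        · rw [mix_of_mem hiP, mix_of_mem hiP]
        · rw [mix_of_notMem hiP, mix_of_notMem hiP]
          refine hy i ⟨(hk.monotone (by omega)).trans hi.1, ?_⟩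
          by_contra hlt
          refine hiP ⟨j / 2 + 1, not_lt.1 hlt, hi.2.trans_le (hk.monotone (by omega))⟩
      simp only [T, mem_ofPred_eq, this]
    · have hmem : mix P X y ∈ filterSet F := by
        refine mem_of_superset (inter_mem hX hy) fun n hn => ?_
        by_cases hP : n ∈ P
        · exact (mix_of_mem hP X y).trans hn.1
        · exact (mix_of_notMem hP X y).trans hn.2
      exact ((hcov _ hmem).sdiff hXB).mono fun j hj => ⟨hj.2, hj.1⟩
    · refine ne_top_of_le_ne_top hgeom (ENNReal.tsum_le_tsum fun j => ?_)
      by_cases hXj : X ∈ B j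
      · simp [T, hXj]
      · exact (measure_mono fun y hy => hy.2).trans (not_le.1 hXj).le

lemma IsSmall.measure_eq_zero {μ : Measure (ℕ → Bool)} {A : Set (ℕ → Bool)}
    (h : IsSmall μ A) : μ A = 0 := by
  obtain ⟨k, J, -, -, -, hA, hsum⟩ := h
  refine measure_mono_null (fun x hx => ?_) (measure_limsup_cofinite_eq_zero hsum)
  rw [cofinite.limsup_set_eq]
  exact hA hx

lemma dependsOn_mem_filterSet {F : Filter ℕ} (hF : F ≤ Filter.cofinite) (s : Finset ℕ) :
    DependsOn (fun x => x ∈ filterSet F) (s : Set ℕ)ᶜ := by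
  have hs : (s : Set ℕ)ᶜ ∈ F := hF s.finite_toSet.compl_mem_cofinite
  intro x y hxy
  refine propext ⟨fun h => mem_of_superset (inter_mem h hs) fun n hn => ?_,
    fun h => mem_of_superset (inter_mem h hs) fun n hn => ?_⟩
  · exact (hxy n hn.2).symm.trans hn.1
  · exact (hxy n hn.2).trans hn.1

theorem filter_measurable_iff_small (μ : Measure (ℕ → Bool)) (p : ℕ → ℝ≥0∞)
    (hp : ∀ n, 0 < p n ∧ p n ≤ 1 / 2) (hμ : IsBernoulli μ p)
    (F : Filter ℕ) [F.NeBot] (hF : F ≤ Filter.cofinite) :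
    NullMeasurableSet (filterSet F) μ ↔ IsSmall μ (filterSet F) := by
  refine ⟨fun hm => ?_, fun h => NullMeasurableSet.of_null h.measure_eq_zero⟩
  have hp1 (n : ℕ) : 0 < p n ∧ p n < 1 :=
    ⟨(hp n).1, (hp n).2.trans_lt (by rw [one_div]; exact ENNReal.one_half_lt_one)⟩
  rcases hμ.measure_eq_zero_or_measure_compl_eq_zero hm (dependsOn_mem_filterSet hF) with h | h
  · exact hμ.isSmall_filterSet hp1 h
  · obtain ⟨x, hx, y, hy, hxy⟩ := hμ.exists_disjoint (fun n => (hp n).2) h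
    refine absurd (inter_mem hx hy) ?_
    convert F.empty_notMem
    exact eq_empty_of_forall_notMem fun n hn => hxy n hn
end

section
/- A nonprincipal filter F on ω is μ_p̂-measurable if and only if there exists a family (A_n) where each A_n is a finite collection of finite subsets of ω, the unions ⋃A_n are pairwise disjoint, Σ_n μ_p̂({X ⊆ ω : ∃a ∈ A_n, a ⊆ X}) < ∞, and every X ∈ F contains some member of A_n for infinitely many n. -/
open MeasureTheory Filter Set
open scoped ENNReal

/-! ### Bernoulli measures -/

/-- The cylinder set of all points agreeing with `f` on `s`. -/
def boolCylinder {ι : Type*} (s : Finset ι) (f : ι → Bool) : Set (ι → Bool) :=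
  {x | ∀ i ∈ s, x i = f i}

theorem mem_boolCylinder {ι : Type*} {s : Finset ι} {f x : ι → Bool} :
    x ∈ boolCylinder s f ↔ ∀ i ∈ s, x i = f i := Iff.rfl

theorem measurableSet_boolCylinder {ι : Type*} (s : Finset ι) (f : ι → Bool) :
    MeasurableSet (boolCylinder s f) := by
  have : boolCylinder s f = ⋂ i ∈ s, (fun x : ι → Bool => x i) ⁻¹' {f i} := by
    ext x; simp [boolCylinder]
  rw [this]
  exact Finset.measurableSet_biInter s fun i _ => measurable_pi_apply i (measurableSet_singleton _)

theorem isPiSystem_boolCylinder {ι : Type*} :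
    IsPiSystem {A : Set (ι → Bool) | ∃ s f, boolCylinder s f = A} := by
  classical
  rintro _ ⟨s, f, rfl⟩ _ ⟨t, g, rfl⟩ ⟨z, hzf, hzg⟩
  refine ⟨s ∪ t, z, ?_⟩
  ext x
  simp only [mem_inter_iff, mem_boolCylinder, Finset.mem_union] at *
  constructor
  · exact fun h => ⟨fun i hi => (h i (.inl hi)).trans (hzf i hi),
      fun i hi => (h i (.inr hi)).trans (hzg i hi)⟩
  · rintro ⟨h1, h2⟩ i (hi | hi)
    · exact (h1 i hi).trans (hzf i hi).symm
    · exact (h2 i hi).trans (hzg i hi).symm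

theorem generateFrom_boolCylinder {ι : Type*} :
    (MeasurableSpace.pi : MeasurableSpace (ι → Bool)) =
      MeasurableSpace.generateFrom {A | ∃ s f, boolCylinder s f = A} := by
  apply le_antisymm
  · rw [MeasurableSpace.pi, iSup_le_iff]
    intro i
    rw [← measurable_iff_comap_le]
    refine @measurable_to_bool _ (MeasurableSpace.generateFrom _) _ ?_
    refine MeasurableSpace.measurableSet_generateFrom ⟨{i}, fun _ => true, ?_⟩
    ext x; simp [boolCylinder]
  · refine MeasurableSpace.generateFrom_le ?_
    rintro _ ⟨s, f, rfl⟩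
    exact measurableSet_boolCylinder s f

theorem measure_ext_boolCylinder {ι : Type*} {μ ν : Measure (ι → Bool)} [IsFiniteMeasure μ]
    (h : ∀ s f, μ (boolCylinder s f) = ν (boolCylinder s f)) : μ = ν := by
  refine ext_of_generate_finite _ generateFrom_boolCylinder isPiSystem_boolCylinder ?_ ?_
  · rintro _ ⟨s, f, rfl⟩
    exact h s f
  · simpa [boolCylinder] using h ∅ fun _ => true

theorem IsBernoulli.measure_boolCylinder {ι : Type*} {μ : Measure (ι → Bool)} {p : ι → ℝ≥0∞}
    (hμ : IsBernoulli μ p) (s : Finset ι) (f : ι → Bool) :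
    μ (boolCylinder s f) = ∏ i ∈ s, (if f i then p i else 1 - p i) := hμ.2 s f

theorem IsBernoulli.unique {ι : Type*} {μ ν : Measure (ι → Bool)} {p : ι → ℝ≥0∞}
    (hμ : IsBernoulli μ p) (hν : IsBernoulli ν p) : μ = ν := by
  have := hμ.1
  exact measure_ext_boolCylinder fun s f => by
    rw [hμ.measure_boolCylinder, hν.measure_boolCylinder]

/-- Gluing the restriction to `S` of one random point to the restriction to the complement of `S`
of an independent one yields a random point. -/
theorem IsBernoulli.measurePreserving_piecewise {ι : Type*} [DecidableEq ι]
    {μ : Measure (ι → Bool)} {p : ι → ℝ≥0∞} (hμ : IsBernoulli μ p) (S : Finset ι) :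
    MeasurePreserving (fun z : (ι → Bool) × (ι → Bool) => S.piecewise z.1 z.2) (μ.prod μ) μ := by
  have := hμ.1
  have hm : Measurable fun z : (ι → Bool) × (ι → Bool) => S.piecewise z.1 z.2 := by
    refine measurable_pi_iff.2 fun i => ?_
    by_cases hi : i ∈ S
    · simp only [hi, Finset.piecewise_eq_of_mem]
      fun_prop
    · simp only [hi, not_false_eq_true, Finset.piecewise_eq_of_notMem]
      fun_prop
  refine ⟨hm, ?_⟩
  have := Measure.isProbabilityMeasure_map (μ := μ.prod μ) hm.aemeasurable
  refine measure_ext_boolCylinder fun s f => ?_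
  rw [Measure.map_apply hm (measurableSet_boolCylinder s f)]
  have : (fun z : (ι → Bool) × (ι → Bool) => S.piecewise z.1 z.2) ⁻¹' boolCylinder s f =
      boolCylinder (s.filter (· ∈ S)) f ×ˢ boolCylinder (s.filter (· ∉ S)) f := by
    ext ⟨x, y⟩
    simp only [mem_preimage, mem_prod, mem_boolCylinder, Finset.mem_filter]
    constructor
    · exact fun h => ⟨fun i hi => by simpa [hi.2] using h i hi.1,
        fun i hi => by simpa [hi.2] using h i hi.1⟩
    · rintro ⟨h1, h2⟩ i hi
      by_cases hS : i ∈ S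
      · simpa [hS] using h1 i ⟨hi, hS⟩
      · simpa [hS] using h2 i ⟨hi, hS⟩
  rw [this, Measure.prod_prod, hμ.measure_boolCylinder, hμ.measure_boolCylinder,
    hμ.measure_boolCylinder, Finset.prod_filter_mul_prod_filter_not]

theorem IsBernoulli.boolCylinder_ne_zero {ι : Type*} {μ : Measure (ι → Bool)} {p : ι → ℝ≥0∞}
    (hμ : IsBernoulli μ p) (hp : ∀ i, 0 < p i ∧ p i ≤ 1 / 2) (s : Finset ι) (f : ι → Bool) :
    μ (boolCylinder s f) ≠ 0 := by
  rw [hμ.measure_boolCylinder, Finset.prod_ne_zero_iff]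
  intro i _
  split_ifs
  · exact (hp i).1.ne'
  · refine (tsub_pos_of_lt ((hp i).2.trans_lt ?_)).ne'
    rw [one_div]
    exact ENNReal.inv_lt_one.2 ENNReal.one_lt_two

/-- **Zero-one law** for null measurable sets invariant under finite modifications. -/
theorem IsBernoulli.measure_eq_zero_or_one {ι : Type*} [DecidableEq ι] {μ : Measure (ι → Bool)}
    {p : ι → ℝ≥0∞} (hμ : IsBernoulli μ p) {E : Set (ι → Bool)} (hE : NullMeasurableSet E μ)
    (hinv : ∀ (S : Finset ι) (x y : ι → Bool), S.piecewise x y ∈ E ↔ y ∈ E) :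
    μ E = 0 ∨ μ E = 1 := by
  have := hμ.1
  have key : μ.restrict E = μ E • μ := by
    refine measure_ext_boolCylinder fun s f => ?_
    have hC := measurableSet_boolCylinder s f
    rw [Measure.restrict_apply hC, Measure.smul_apply, smul_eq_mul,
      ← (hμ.measurePreserving_piecewise s).measure_preimage (hC.nullMeasurableSet.inter hE),
      mul_comm, ← Measure.prod_prod]
    congr 1
    ext ⟨x, y⟩
    simp only [mem_preimage, mem_inter_iff, hinv, mem_prod, mem_boolCylinder]
    refine and_congr_left fun _ => forall₂_congr fun i hi => ?_
    simp [hi]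
  have h := congrArg (fun ν : Measure (ι → Bool) => ν E) key
  simp only [Measure.restrict_apply_self, Measure.smul_apply, smul_eq_mul] at h
  by_cases h0 : μ E = 0
  · exact .inl h0
  · right
    have := (ENNReal.mul_right_inj h0 (measure_ne_top μ E)).1 ((mul_one _).trans h)
    exact this.symm

/-- If `p ≤ 1 / 2`, two `p`-random subsets can be coupled so as to be disjoint. -/
theorem exists_disjoint_of_isBernoulli {ι : Type*} [Countable ι] {μ : Measure (ι → Bool)}
    {p : ι → ℝ≥0∞} (hμ : IsBernoulli μ p) (hp : ∀ i, p i ≤ 1 / 2) {E : Set (ι → Bool)}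
    (hE : ∀ᵐ x ∂μ, x ∈ E) : ∃ x ∈ E, ∃ y ∈ E, ∀ i, ¬ (x i = true ∧ y i = true) := by
  have := hμ.1
  let ν : ι → Measure (Bool × Bool) := fun i =>
    p i • Measure.dirac (true, false) + p i • Measure.dirac (false, true)
      + (1 - 2 * p i) • Measure.dirac (false, false)
  have h2 : ∀ i, 2 * p i ≤ 1 := fun i => by
    calc 2 * p i ≤ 2 * (1 / 2) := by gcongr; exact hp i
      _ = 1 := by rw [one_div]; exact ENNReal.mul_inv_cancel (by simp) (by simp)
  have hsum : ∀ i, p i + (1 - 2 * p i) = 1 - p i := fun i => by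
    have hpt : p i ≠ ⊤ := ((hp i).trans_lt (by simp)).ne
    refine ENNReal.eq_sub_of_add_eq hpt ?_
    rw [add_right_comm, ← two_mul]
    exact add_tsub_cancel_of_le (h2 i)
  have hν : ∀ i, IsProbabilityMeasure (ν i) := fun i => ⟨by
    simp only [ν, Measure.add_apply, Measure.smul_apply, smul_eq_mul, measure_univ, mul_one]
    rw [← two_mul]
    exact add_tsub_cancel_of_le (h2 i)⟩
  let ρ := Measure.infinitePi ν
  have hlaw : ∀ g : Bool × Bool → Bool,
      (∀ i b, ν i {z | g z = b} = if b then p i else 1 - p i) →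
      ρ.map (fun z i => g (z i)) = μ ∧ Measurable (fun (z : ι → Bool × Bool) i => g (z i)) := by
    intro g hg
    have hm : Measurable (fun (z : ι → Bool × Bool) i => g (z i)) :=
      measurable_pi_iff.2 fun i => (measurable_of_countable g).comp (measurable_pi_apply i)
    refine ⟨IsBernoulli.unique (p := p) ⟨Measure.isProbabilityMeasure_map hm.aemeasurable, ?_⟩ hμ,
      hm⟩
    intro s f
    have := Measure.map_apply (μ := ρ) hm (measurableSet_boolCylinder s f)
    refine this.trans ?_
    have : (fun (z : ι → Bool × Bool) i => g (z i)) ⁻¹' boolCylinder s f =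
        (s : Set ι).pi fun i => {z | g z = f i} := by
      ext z; simp [boolCylinder, Set.mem_pi]
    rw [this, Measure.infinitePi_pi _ fun i _ => (Set.toFinite _).measurableSet]
    exact Finset.prod_congr rfl fun i _ => hg i (f i)
  obtain ⟨hfst, hfst_m⟩ := hlaw Prod.fst fun i b => by
    cases b <;> simp [ν, hsum]
  obtain ⟨hsnd, hsnd_m⟩ := hlaw Prod.snd fun i b => by
    cases b <;> simp [ν, hsum]
  have h1 : ∀ᵐ z ∂ρ, (fun i => (z i).1) ∈ E :=
    ae_of_ae_map hfst_m.aemeasurable (hfst.symm ▸ hE)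
  have h2 : ∀ᵐ z ∂ρ, (fun i => (z i).2) ∈ E :=
    ae_of_ae_map hsnd_m.aemeasurable (hsnd.symm ▸ hE)
  have h3 : ∀ᵐ z ∂ρ, ∀ i, ¬ ((z i).1 = true ∧ (z i).2 = true) := by
    rw [ae_all_iff]
    intro i
    have : ∀ᵐ b ∂(ν i), ¬ (b.1 = true ∧ b.2 = true) := by
      rw [ae_iff]; simp [ν]
    exact (measurePreserving_eval_infinitePi ν i).quasiMeasurePreserving.ae this
  obtain ⟨z, hz1, hz2, hz3⟩ := (h1.and (h2.and h3)).exists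
  exact ⟨_, hz1, _, hz2, hz3⟩

/-! ### Covering null sets by sets depending on finite blocks of coordinates -/

theorem DependsOn.measurableSet_of_finite {ι : Type*} {A : Set (ι → Bool)} {S : Set ι}
    (h : DependsOn (· ∈ A) S) (hS : S.Finite) : MeasurableSet A := by
  lift S to Finset ι using hS
  have : A = S.restrict ⁻¹' (S.restrict '' A) := by
    refine (subset_preimage_image _ _).antisymm ?_
    rintro x ⟨y, hy, hxy⟩
    exact (h fun i hi => congrFun hxy ⟨i, hi⟩).mp hy
  rw [this]
  exact Finset.measurable_restrict S (Set.toFinite _).measurableSet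

theorem boolCylinder_subset_of_agree {s : Finset ℕ} {x y : ℕ → Bool} (h : ∀ i ∈ s, x i = y i) :
    boolCylinder s x = boolCylinder s y := by
  ext z
  exact forall₂_congr fun i hi => by rw [h i hi]

theorem exists_boolCylinder_subset_of_isOpen {G : Set (ℕ → Bool)} (hG : IsOpen G) {x : ℕ → Bool}
    (hx : x ∈ G) : ∃ m, ∀ j, m ≤ j → boolCylinder (Finset.range j) x ⊆ G := by
  obtain ⟨I, u, hu, hsub⟩ := isOpen_pi_iff.1 hG x hx
  refine ⟨I.sup id + 1, fun j hj y hy => hsub fun i hi => ?_⟩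
  have : i ≤ I.sup id := Finset.le_sup (f := id) hi
  rw [hy i (Finset.mem_range.2 (by omega))]
  exact (hu i hi).2

theorem exists_dependsOn_cover_of_null {μ : Measure (ℕ → Bool)} [IsFiniteMeasure μ]
    {E : Set (ℕ → Bool)} (hE : μ E = 0) :
    ∃ D : ℕ → Set (ℕ → Bool), (∀ j, DependsOn (· ∈ D j) (Iio j)) ∧ ∑' j, μ (D j) ≠ ⊤ ∧
      ∀ x ∈ E, ∃ᶠ j in atTop, x ∈ D j := by
  have hG : ∀ n : ℕ, ∃ U ⊇ E, IsOpen U ∧ μ U < (2⁻¹ : ℝ≥0∞) ^ n := fun n =>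
    E.exists_isOpen_lt_of_lt _ (by rw [hE]; exact ENNReal.pow_pos (by simp) n)
  choose G hEG hGo hGμ using hG
  let Q : ℕ → ℕ → (ℕ → Bool) → Prop := fun n j x =>
    n ≤ j ∧ boolCylinder (Finset.range j) x ⊆ G n
  let L : ℕ → ℕ → Set (ℕ → Bool) := fun n j => {x | Q n j x ∧ ∀ m < j, ¬ Q n m x}
  have hL : ∀ n j (x y : ℕ → Bool), (∀ i < j, x i = y i) → (x ∈ L n j ↔ y ∈ L n j) := by
    intro n j x y hxy
    have hQ : ∀ m ≤ j, (Q n m x ↔ Q n m y) := fun m hm => by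
      simp only [Q]
      rw [boolCylinder_subset_of_agree fun i hi => hxy i ((Finset.mem_range.1 hi).trans_le hm)]
    exact and_congr (hQ j le_rfl) (forall₂_congr fun m hm => not_congr (hQ m hm.le))
  refine ⟨fun j => ⋃ n, L n j, fun j x y hxy => ?_, ?_, fun x hx => ?_⟩
  · simp only [mem_iUnion, eq_iff_iff]
    exact exists_congr fun n => hL n j x y hxy
  · have hle : ∑' j, μ (⋃ n, L n j) ≤ ∑' n : ℕ, (2⁻¹ : ℝ≥0∞) ^ n := calc
      ∑' j, μ (⋃ n, L n j) ≤ ∑' j, ∑' n, μ (L n j) :=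
        ENNReal.tsum_le_tsum fun j => measure_iUnion_le _
      _ = ∑' n, ∑' j, μ (L n j) := ENNReal.tsum_comm
      _ = ∑' n, μ (⋃ j, L n j) := by
        refine tsum_congr fun n => (measure_iUnion ?_ fun j => ?_).symm
        · intro i j hij
          refine Set.disjoint_left.2 fun x hxi hxj => ?_
          rcases lt_or_gt_of_ne hij with h | h
          · exact hxj.2 i h hxi.1
          · exact hxi.2 j h hxj.1
        · exact DependsOn.measurableSet_of_finite (S := Iio j)
            (fun x y hxy => propext (hL n j x y hxy)) (Set.finite_Iio j)
      _ ≤ ∑' n : ℕ, (2⁻¹ : ℝ≥0∞) ^ n := by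
        refine ENNReal.tsum_le_tsum fun n => (measure_mono ?_).trans (hGμ n).le
        refine iUnion_subset fun j x hx => hx.1.2 fun i _ => rfl
    refine (hle.trans_lt ?_).ne
    rw [ENNReal.tsum_geometric, ENNReal.one_sub_inv_two, inv_inv]
    exact ENNReal.ofNat_lt_top
  · rw [frequently_atTop]
    intro n
    obtain ⟨m, hm⟩ := exists_boolCylinder_subset_of_isOpen (hGo n) (hEG n hx)
    have hex : ∃ j, Q n j x := ⟨max n m, le_max_left _ _, hm _ (le_max_right _ _)⟩
    classical
    exact ⟨Nat.find hex, (Nat.find_spec hex).1,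
      mem_iUnion.2 ⟨n, Nat.find_spec hex, fun m hm => Nat.find_min hex hm⟩⟩

/-- All points agreeing with some point of `A` from `k` on. -/
def tailHull (k : ℕ) (A : Set (ℕ → Bool)) : Set (ℕ → Bool) :=
  {x | ∃ y ∈ A, ∀ n, k ≤ n → y n = x n}

theorem IsBernoulli.exists_measure_tailHull_le {μ : Measure (ℕ → Bool)} {p : ℕ → ℝ≥0∞}
    (hμ : IsBernoulli μ p) (hp : ∀ i, 0 < p i ∧ p i ≤ 1 / 2) (k : ℕ) :
    ∃ c : ℝ≥0∞, c ≠ ⊤ ∧ ∀ A, MeasurableSet A → μ (tailHull k A) ≤ c * μ A := by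
  have := hμ.1
  let χ : Finset ℕ → ℕ → Bool := fun a n => decide (n ∈ a)
  have hC : ∀ a, μ (boolCylinder (Finset.range k) (χ a)) ≠ 0 := fun a =>
    hμ.boolCylinder_ne_zero hp _ _
  refine ⟨∑ a ∈ (Finset.range k).powerset, (μ (boolCylinder (Finset.range k) (χ a)))⁻¹,
    ENNReal.sum_ne_top.2 fun a _ => ENNReal.inv_ne_top.2 (hC a), fun A hA => ?_⟩
  have hsub : tailHull k A ⊆ ⋃ a ∈ (Finset.range k).powerset,
      {x | (Finset.range k).piecewise (χ a) x ∈ A} := by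
    rintro x ⟨y, hy, hyx⟩
    refine mem_iUnion₂.2 ⟨(Finset.range k).filter (y · = true),
      Finset.mem_powerset.2 (Finset.filter_subset _ _), ?_⟩
    have h : (Finset.range k).piecewise (χ ((Finset.range k).filter (y · = true))) x = y := by
      ext n
      by_cases hn : n < k
      · simp [Finset.piecewise, hn, χ]
      · simp [Finset.piecewise, hn, hyx n (not_lt.1 hn)]
    exact (congrArg (· ∈ A) h).mpr hy
  refine (measure_mono hsub).trans ((measure_biUnion_finset_le _ _).trans ?_)
  rw [Finset.sum_mul]
  refine Finset.sum_le_sum fun a _ => ?_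
  rw [← ENNReal.mul_le_iff_le_inv (hC a) (measure_ne_top _ _), ← Measure.prod_prod,
    ← (hμ.measurePreserving_piecewise (Finset.range k)).measure_preimage hA.nullMeasurableSet]
  refine measure_mono ?_
  rintro ⟨x, y⟩ ⟨hx, hy⟩
  have h : (Finset.range k).piecewise x y = (Finset.range k).piecewise (χ a) y := by
    ext n
    by_cases hn : n ∈ Finset.range k
    · simp only [hn, Finset.piecewise_eq_of_mem]
      exact hx n hn
    · simp [hn]
  exact (congrArg (· ∈ A) h).mpr hy

theorem IsBernoulli.exists_block_cover_of_null {μ : Measure (ℕ → Bool)} {p : ℕ → ℝ≥0∞}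
    (hμ : IsBernoulli μ p) (hp : ∀ i, 0 < p i ∧ p i ≤ 1 / 2) {E : Set (ℕ → Bool)}
    (hE : μ E = 0) {ε : ℕ → ℝ≥0∞} (hε : ∀ i, 0 < ε i) :
    ∃ k : ℕ → ℕ, StrictMono k ∧ ∃ J : ℕ → Set (ℕ → Bool),
      (∀ i, DependsOn (· ∈ J i) (Ico (k i) (k (i + 2)))) ∧ (∀ i, μ (J i) ≤ ε i) ∧
      ∀ x ∈ E, ∃ᶠ i in atTop, x ∈ J i := by
  have := hμ.1
  obtain ⟨D, hD, hDsum, hDE⟩ := exists_dependsOn_cover_of_null hE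
  have hDm : ∀ j, MeasurableSet (D j) := fun j => (hD j).measurableSet_of_finite (finite_Iio j)
  choose c hc_top hc using hμ.exists_measure_tailHull_le hp
  have hN : ∀ k i, ∃ N, k < N ∧ c k * ∑' j, μ (D (j + N)) ≤ ε i := by
    intro k i
    have h : Tendsto (fun N => c k * ∑' j, μ (D (j + N))) atTop (nhds (c k * 0)) :=
      ENNReal.Tendsto.const_mul (ENNReal.tendsto_sum_nat_add _ hDsum) (.inr (hc_top k))
    rw [mul_zero] at h
    obtain ⟨N, h1, h2⟩ := ((eventually_gt_atTop k).and (h.eventually_lt_const (hε i))).exists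
    exact ⟨N, h1, h2.le⟩
  choose N hkN hN using hN
  obtain ⟨k, hk_succ⟩ : ∃ k : ℕ → ℕ, ∀ i, k (i + 1) = N (k i) i :=
    ⟨fun i => Nat.rec 0 (fun i m => N m i) i, fun _ => rfl⟩
  have hk : StrictMono k := strictMono_nat_of_lt_succ fun i => hk_succ i ▸ hkN (k i) i
  refine ⟨k, hk, fun i => tailHull (k i) (⋃ j ∈ Finset.Ioc (k (i + 1)) (k (i + 2)), D j),
    fun i => ?_, fun i => ?_, fun x hx => ?_⟩
  · have key : ∀ x y : ℕ → Bool, (∀ n ∈ Ico (k i) (k (i + 2)), x n = y n) →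
        x ∈ tailHull (k i) (⋃ j ∈ Finset.Ioc (k (i + 1)) (k (i + 2)), D j) →
        y ∈ tailHull (k i) (⋃ j ∈ Finset.Ioc (k (i + 1)) (k (i + 2)), D j) := by
      rintro x y hxy ⟨z, hz, hzx⟩
      obtain ⟨j, hj, hzj⟩ := mem_iUnion₂.1 hz
      refine ⟨(Finset.range (k i)).piecewise z y, mem_iUnion₂.2 ⟨j, hj, ?_⟩, fun n hn => ?_⟩
      · refine (hD j fun (n : ℕ) hn => ?_).mp hzj
        rcases lt_or_ge n (k i) with h | h
        · simp [Finset.piecewise, h]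
        · simp only [Finset.piecewise, Finset.mem_range, not_lt.2 h, if_false]
          rw [hzx n h]
          exact hxy n ⟨h, (mem_Iio.1 hn).trans_le (Finset.mem_Ioc.1 hj).2⟩
      · simp [Finset.piecewise, not_lt.2 hn]
    exact fun x y hxy => propext ⟨key x y hxy, key y x fun n hn => (hxy n hn).symm⟩
  · refine (hc _ _ (Finset.measurableSet_biUnion _ fun j _ => hDm j)).trans
      (le_trans ?_ (hN (k i) i))
    gcongr
    refine (measure_mono ?_).trans (measure_iUnion_le _)
    refine iUnion₂_subset fun j hj => ?_
    have h := (Finset.mem_Ioc.1 hj).1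
    rw [hk_succ] at h
    refine subset_iUnion_of_subset (j - N (k i) i) ?_
    rw [Nat.sub_add_cancel h.le]
  · rw [frequently_atTop]
    intro i₀
    obtain ⟨j, hj, hxj⟩ := frequently_atTop.1 (hDE x hx) (k (i₀ + 1) + 1)
    have hex : ∃ m, j ≤ k m := ⟨j, hk.le_apply⟩
    have h1 := Nat.find_spec hex
    have h2 : i₀ + 1 < Nat.find hex := by
      by_contra! h
      have := hk.monotone h
      omega
    obtain ⟨i, hi⟩ : ∃ i, Nat.find hex = i + 2 := ⟨Nat.find hex - 2, by omega⟩
    have h3 := Nat.find_min hex (m := i + 1) (by omega)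
    rw [hi] at h1
    exact ⟨i, by omega, x, mem_iUnion₂.2 ⟨j, Finset.mem_Ioc.2 ⟨not_le.1 h3, h1⟩, hxj⟩,
      fun _ _ => rfl⟩

theorem IsBernoulli.measure_section_ge_le {ι : Type*} [DecidableEq ι] {μ : Measure (ι → Bool)}
    {p : ι → ℝ≥0∞} (hμ : IsBernoulli μ p) (S : Finset ι) {A : Set (ι → Bool)}
    (hA : MeasurableSet A) {η : ℝ≥0∞} (h0 : η ≠ 0) (htop : η ≠ ⊤) :
    μ {x | η ≤ μ {y | S.piecewise x y ∈ A}} ≤ μ A / η := by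
  have := hμ.1
  have hmp := hμ.measurePreserving_piecewise S
  have hA' := hmp.measurable hA
  refine (meas_ge_le_lintegral_div (measurable_measure_prodMk_left hA').aemeasurable h0 htop).trans
    (le_of_eq ?_)
  rw [← Measure.prod_apply hA', hmp.measure_preimage hA.nullMeasurableSet]

/-! ### Tests for filters -/

theorem StrictMono.eq_of_mem_Ico_succ {k : ℕ → ℕ} (hk : StrictMono k) {n i j : ℕ}
    (hi : n ∈ Finset.Ico (k i) (k (i + 1))) (hj : n ∈ Finset.Ico (k j) (k (j + 1))) : i = j := by
  rw [Finset.mem_Ico] at hi hj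
  rcases lt_trichotomy i j with h | h | h
  · have : k (i + 1) ≤ k j := hk.monotone h
    omega
  · exact h
  · have : k (j + 1) ≤ k i := hk.monotone h
    omega

/-- A sequence of finite collections of finite sets, with disjoint supports and summable measures,
infinitely many of which are hit by every set in the filter. -/
def IsFilterTest (μ : Measure (ℕ → Bool)) (F : Filter ℕ) (A : ℕ → Finset (Finset ℕ)) : Prop :=
  (∀ m n, m ≠ n → ∀ a ∈ A m, ∀ b ∈ A n, Disjoint a b) ∧
  (∑' n, μ {x | ∃ a ∈ A n, ∀ i ∈ a, x i = true} ≠ ⊤) ∧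
  (∀ X ∈ F, {n | ∃ a ∈ A n, (a : Set ℕ) ⊆ X}.Infinite)

/-- If there is no test for `F`, then `F` has members avoiding any given summable sequence of sets
depending on disjoint blocks of coordinates. -/
theorem exists_mem_filterSet_eventually_notMem {μ : Measure (ℕ → Bool)} {F : Filter ℕ}
    (hno : ¬ ∃ A, IsFilterTest μ F A) {k : ℕ → ℕ} (hk : StrictMono k) {T : ℕ → Set (ℕ → Bool)}
    (hT : ∀ i, DependsOn (· ∈ T i) (Ico (k i) (k (i + 1)))) (hsum : ∑' i, μ (T i) ≠ ⊤) :
    ∃ z ∈ filterSet F, ∀ᶠ i in atTop, z ∉ T i := by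
  classical
  let B : ℕ → Finset ℕ := fun i => Finset.Ico (k i) (k (i + 1))
  let A : ℕ → Finset (Finset ℕ) := fun i =>
    (B i).powerset.filter fun a => ∀ y : ℕ → Bool, (∀ n ∈ a, y n = true) → y ∈ T i
  obtain ⟨X, hX, hfin⟩ : ∃ X ∈ F, ¬ {n | ∃ a ∈ A n, (a : Set ℕ) ⊆ X}.Infinite := by
    by_contra! hall
    refine hno ⟨A, fun i j hij a ha b hb => ?_, ?_, hall⟩
    · simp only [A, Finset.mem_filter, Finset.mem_powerset] at ha hb
      exact Finset.disjoint_left.2 fun n hna hnb =>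
        hij (hk.eq_of_mem_Ico_succ (ha.1 hna) (hb.1 hnb))
    · refine ne_top_of_le_ne_top hsum (ENNReal.tsum_le_tsum fun i => measure_mono ?_)
      rintro x ⟨a, ha, hax⟩
      exact (Finset.mem_filter.1 ha).2 x hax
  obtain ⟨N, hN⟩ := (not_infinite.1 hfin).bddAbove
  have hy : ∀ i, N < i → ∃ y : ℕ → Bool, (∀ n ∈ (B i).filter (· ∈ X), y n = true) ∧ y ∉ T i := by
    intro i hi
    by_contra! h
    refine not_le.2 hi (hN ⟨(B i).filter (· ∈ X), ?_, fun n hn => ?_⟩)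
    · simp only [A, Finset.mem_filter, Finset.mem_powerset]
      exact ⟨Finset.filter_subset _ _, fun y hy => h y fun n hn => hy n (Finset.mem_filter.1 hn)⟩
    · exact (Finset.mem_filter.1 hn).2
  choose y hyX hyT using hy
  refine ⟨fun n => decide (∀ i (hi : N < i), n ∈ B i → y i hi n = true), ?_, ?_⟩
  · refine mem_of_superset hX fun n hn => ?_
    simp only [mem_ofPred_eq, decide_eq_true_eq]
    exact fun i hi hni => hyX i hi n (Finset.mem_filter.2 ⟨hni, hn⟩)
  · filter_upwards [eventually_gt_atTop N] with i hi hmem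
    refine hyT i hi ((hT i fun n hn => ?_).mp hmem)
    have hni : n ∈ B i := Finset.mem_Ico.2 hn
    rw [Bool.eq_iff_iff, decide_eq_true_eq]
    refine ⟨fun h => h i hi hni, fun h j hj hnj => ?_⟩
    obtain rfl := hk.eq_of_mem_Ico_succ hni hnj
    exact h

theorem piecewise_mem_filterSet_iff {F : Filter ℕ} (hF : F ≤ cofinite) (S : Finset ℕ)
    (x y : ℕ → Bool) : S.piecewise x y ∈ filterSet F ↔ y ∈ filterSet F := by
  refine congr_sets (hF ?_)
  refine mem_of_superset (S.finite_toSet.compl_mem_cofinite) fun n hn => ?_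
  have hn : n ∉ S := hn
  simp [hn]

theorem measure_filterSet_eq_zero {μ : Measure (ℕ → Bool)} {p : ℕ → ℝ≥0∞}
    (hμ : IsBernoulli μ p) (hp : ∀ i, p i ≤ 1 / 2) {F : Filter ℕ} [F.NeBot] (hF : F ≤ cofinite)
    (hE : NullMeasurableSet (filterSet F) μ) : μ (filterSet F) = 0 := by
  have := hμ.1
  refine (hμ.measure_eq_zero_or_one hE (piecewise_mem_filterSet_iff hF)).resolve_right fun h1 => ?_
  have hae : ∀ᵐ x ∂μ, x ∈ filterSet F := (prob_compl_eq_zero_iff₀ hE).2 h1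
  obtain ⟨x, hx, y, hy, hxy⟩ := exists_disjoint_of_isBernoulli hμ hp hae
  obtain ⟨n, hnx, hny⟩ := Filter.nonempty_of_mem (inter_mem hx hy)
  exact hxy n ⟨hnx, hny⟩

theorem tsum_geometric_add_pred_ne_top :
    ∑' i : ℕ, ((2⁻¹ : ℝ≥0∞) ^ i + 2⁻¹ ^ (i - 1)) ≠ ⊤ := by
  have h : ∑' i : ℕ, (2⁻¹ : ℝ≥0∞) ^ i = 2 := by
    rw [ENNReal.tsum_geometric, ENNReal.one_sub_inv_two, inv_inv]
  rw [ENNReal.tsum_add, h, tsum_eq_zero_add' ENNReal.summable]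
  simp [h]

theorem exists_isFilterTest_of_null {μ : Measure (ℕ → Bool)} {p : ℕ → ℝ≥0∞}
    (hμ : IsBernoulli μ p) (hp : ∀ i, 0 < p i ∧ p i ≤ 1 / 2) {F : Filter ℕ}
    (hE : μ (filterSet F) = 0) : ∃ A, IsFilterTest μ F A := by
  classical
  by_contra hno
  have := hμ.1
  have hη : ∀ i : ℕ, (2⁻¹ : ℝ≥0∞) ^ i ≠ 0 := fun i => (ENNReal.pow_pos (by simp) i).ne'
  have hη' : ∀ i : ℕ, (2⁻¹ : ℝ≥0∞) ^ i ≠ ⊤ := fun i => ENNReal.pow_ne_top (by simp)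
  obtain ⟨k, hk, J, hJ, hJμ, hJE⟩ := hμ.exists_block_cover_of_null hp hE
    (ε := fun i => 2⁻¹ ^ i * 2⁻¹ ^ i) fun i => ENNReal.mul_pos (hη i) (hη i)
  let B : ℕ → Finset ℕ := fun i => Finset.Ico (k i) (k (i + 1))
  have hB : ∀ {i j n}, n ∈ B i → n ∈ B j → i = j := fun hi hj => hk.eq_of_mem_Ico_succ hi hj
  have hJm : ∀ i, MeasurableSet (J i) := fun i => (hJ i).measurableSet_of_finite (finite_Ico _ _)
  have hJcongr : ∀ i (x y : ℕ → Bool), (∀ n ∈ B i, x n = y n) → (∀ n ∈ B (i + 1), x n = y n) →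
      (x ∈ J i ↔ y ∈ J i) := by
    refine fun i x y h1 h2 => iff_of_eq (hJ i fun n hn => ?_)
    rcases lt_or_ge n (k (i + 1)) with h | h
    · exact h1 n (Finset.mem_Ico.2 ⟨hn.1, h⟩)
    · exact h2 n (Finset.mem_Ico.2 ⟨h, hn.2⟩)
  -- `s` is the set of points whose restriction to a block has a large section of `J j`
  let s : ℕ → ℕ → Set (ℕ → Bool) := fun i j =>
    {x | (2⁻¹ : ℝ≥0∞) ^ j ≤ μ {y | (B i).piecewise x y ∈ J j}}
  have hs : ∀ i j, μ (s i j) ≤ 2⁻¹ ^ j := fun i j => by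
    refine (hμ.measure_section_ge_le (B i) (hJm j) (hη j) (hη' j)).trans ?_
    exact ENNReal.div_le_of_le_mul (hJμ j)
  have hpw : ∀ i (x x' y : ℕ → Bool), (∀ n ∈ Ico (k i) (k (i + 1)), x n = x' n) →
      (B i).piecewise x y = (B i).piecewise x' y := fun i x x' y h =>
    (B i).piecewise_congr (fun n hn => h n (Finset.mem_Ico.1 hn)) fun _ _ => rfl
  obtain ⟨z, hzF, hz⟩ := exists_mem_filterSet_eventually_notMem hno hk
    (T := fun i => s i i ∪ s i (i - 1))
    (fun i x x' h => by simp only [s, mem_union, mem_ofPred_eq, hpw i x x' _ h])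
    (ne_top_of_le_ne_top tsum_geometric_add_pred_ne_top <| ENNReal.tsum_le_tsum fun i =>
      (measure_union_le _ _).trans (add_le_add (hs _ _) (hs _ _)))
  obtain ⟨N, hN⟩ := eventually_atTop.1 hz
  have hswap : ∀ i (x : ℕ → Bool),
      ((B i).piecewise x z ∈ J i ↔ (B (i + 1)).piecewise z x ∈ J i) ∧
      ((B (i + 1)).piecewise x z ∈ J i ↔ (B i).piecewise z x ∈ J i) := by
    refine fun i x => ⟨hJcongr i _ _ (fun n hn => ?_) fun n hn => ?_,
      hJcongr i _ _ (fun n hn => ?_) fun n hn => ?_⟩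
    · have : n ∉ B (i + 1) := fun h => absurd (hB hn h) (by omega)
      simp [hn, this]
    · have : n ∉ B i := fun h => absurd (hB hn h) (by omega)
      simp [hn, this]
    · have : n ∉ B (i + 1) := fun h => absurd (hB hn h) (by omega)
      simp [hn, this]
    · have : n ∉ B i := fun h => absurd (hB hn h) (by omega)
      simp [hn, this]
  obtain ⟨y, hyF, hy⟩ := exists_mem_filterSet_eventually_notMem hno hk
    (T := fun i => {x | N + 1 ≤ i ∧
      ((B i).piecewise x z ∈ J i ∨ (B i).piecewise x z ∈ J (i - 1))})
    (fun i x x' h => by simp only [mem_ofPred_eq, hpw i x x' _ h])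
    (ne_top_of_le_ne_top tsum_geometric_add_pred_ne_top <| ENNReal.tsum_le_tsum fun i => by
      rcases lt_or_ge i (N + 1) with hi | hi
      · simp [not_le.2 hi]
      · obtain ⟨i, rfl⟩ : ∃ j, i = j + 1 := ⟨i - 1, by omega⟩
        refine (measure_mono (t := {x | (B (i + 2)).piecewise z x ∈ J (i + 1)} ∪
          {x | (B i).piecewise z x ∈ J i}) ?_).trans
          ((measure_union_le _ _).trans (add_le_add ?_ ?_))
        · rintro x ⟨_, h | h⟩
          · exact .inl ((hswap (i + 1) x).1.1 h)
          · exact .inr ((hswap i x).2.1 h)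
        · exact (not_le.1 fun h => hN (i + 2) (by omega) (.inr h)).le
        · exact (not_le.1 fun h => hN i (by omega) (.inl h)).le)
  let w : ℕ → Bool := fun n => if ∃ i, Even i ∧ n ∈ B i then y n else z n
  have hw_even : ∀ {i n}, Even i → n ∈ B i → w n = y n := fun hi hn => if_pos ⟨_, hi, hn⟩
  have hw_odd : ∀ {i n}, ¬ Even i → n ∈ B i → w n = z n := fun hi hn =>
    if_neg fun ⟨_, hj, hnj⟩ => hi (hB hn hnj ▸ hj)
  have hwF : w ∈ filterSet F := by
    refine mem_of_superset (inter_mem hyF hzF) fun n hn => ?_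
    simp only [mem_inter_iff, mem_ofPred_eq] at hn
    simp [w, hn.1, hn.2]
  obtain ⟨M, hM⟩ := eventually_atTop.1 hy
  obtain ⟨i, hi, hwi⟩ := frequently_atTop.1 (hJE w hwF) (M + N + 1)
  by_cases he : Even i
  · refine hM i (by omega) ⟨by omega, .inl ?_⟩
    have ho : ¬ Even (i + 1) := by simpa [Nat.even_add_one] using he
    refine (hJcongr i _ _ (fun n hn => ?_) fun n hn => ?_).1 hwi
    · simp [hn, hw_even he hn]
    · have : n ∉ B i := fun h => absurd (hB hn h) (by omega)
      simp [this, hw_odd ho hn]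
  · refine hM (i + 1) (by omega) ⟨by omega, .inr ?_⟩
    have ho : Even (i + 1) := by simpa [Nat.even_add_one] using he
    refine (hJcongr i _ _ (fun n hn => ?_) fun n hn => ?_).1 hwi
    · have : n ∉ B (i + 1) := fun h => absurd (hB hn h) (by omega)
      simp [this, hw_odd he hn]
    · simp [hn, hw_even ho hn]

theorem IsFilterTest.measure_filterSet_eq_zero {μ : Measure (ℕ → Bool)} {F : Filter ℕ}
    {A : ℕ → Finset (Finset ℕ)} (hA : IsFilterTest μ F A) : μ (filterSet F) = 0 := by
  refine measure_mono_null (fun x hx => ?_) (measure_limsup_atTop_eq_zero hA.2.1)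
  rw [mem_limsup_iff_frequently_mem, Nat.frequently_atTop_iff_infinite]
  exact hA.2.2 _ hx

theorem filter_measurable_iff_tests (μ : Measure (ℕ → Bool)) (p : ℕ → ℝ≥0∞)
    (hp : ∀ n, 0 < p n ∧ p n ≤ 1 / 2) (hμ : IsBernoulli μ p)
    (F : Filter ℕ) [F.NeBot] (hF : F ≤ Filter.cofinite) :
    NullMeasurableSet (filterSet F) μ ↔
      ∃ A : ℕ → Finset (Finset ℕ),
        (∀ m n, m ≠ n → ∀ a ∈ A m, ∀ b ∈ A n, Disjoint a b) ∧
        (∑' n, μ {x | ∃ a ∈ A n, ∀ i ∈ a, x i = true} ≠ ⊤) ∧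
        (∀ X ∈ F, {n | ∃ a ∈ A n, (a : Set ℕ) ⊆ X}.Infinite) := by
  refine ⟨fun hE => ?_, fun ⟨A, hA⟩ => ?_⟩
  · exact exists_isFilterTest_of_null hμ hp (measure_filterSet_eq_zero hμ (fun i => (hp i).2) hF hE)
  · exact NullMeasurableSet.of_null (IsFilterTest.measure_filterSet_eq_zero (A := A) hA)
end
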